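/- (Lemma 10) Let A, B ∈ B_{n+1}^+ and let σ be a generator; set L_1 = AσB and L_0 = AB. Then there exist positive braids A′, B′ ∈ B_{n+1}^+ and a generator σ′ such that AσB = A′σ′B′, AB = A′B′, and B′ is a right greatest common divisor of L_1 and L_0 (B′ right-divides both L_1 and L_0, and every positive braid right-dividing both L_1 and L_0 right-divides B′). Symmetrically, there exist A″, B″ ∈ B_{n+1}^+ and a generator σ″ with AσB = A″σ″B″, AB = A″B″, and A″ a left greatest common divisor of L_1 and L_0. -/

import Mathlib

/-!
The proof takes place in the abstract monoid `BMon n` presented by the braid relations, where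
Garside's lemma `BMon.garside` holds: if `s i * a = s j * b`, then both sides are multiples of the
evident common multiple of `s i` and `s j`. In particular `BMon n` is left cancellative.

*Embedding.* With `δ = s 0 ⋯ s (n-1)`, the element `δ ^ (n+1)` is central and divisible by every
generator. Inverting its powers therefore makes every generator invertible, and by
cancellativity no two elements are identified; hence `BMon n` embeds into `BraidGroup n`, with
image `braidPos n`.

*Left gcd.* Let `A * s i * B` and `A * B` be given, and suppose that a generator `s j`
left-divides both `s i * B` and `B`. Garside's lemma describes `B`, and in each of the three
cases (`j = i`, commuting, adjacent) the pair can be rewritten as `A' * s i' * B'`, `A' * B'` with a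
strictly shorter `B'` (`BMon.shorten`). When no such generator is left, `A` is a left gcd: if `c`
is a common divisor, then some common divisor `A * e` is a multiple of both `A` and `c`
(`BMon.exists_joint`), and `e` left-divides `s i * B` and `B`, so `e = 1`.

*Right gcd.* The anti-automorphism of the braid group that fixes the generators reduces this half
to the previous one.
-/

/-- The braid relations for the braid group `B_{n+1}` on generators `σ_1, …, σ_n`
(indexed by `Fin n`, with `i : Fin n` representing `σ_{i+1}`). -/
def braidRels (n : ℕ) : Set (FreeGroup (Fin n)) :=
  {r | ∃ i j : Fin n,
    ((i.val + 1 < j.val ∨ j.val + 1 < i.val) ∧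
      r = FreeGroup.of i * FreeGroup.of j * (FreeGroup.of j * FreeGroup.of i)⁻¹) ∨
    ((i.val + 1 = j.val ∨ j.val + 1 = i.val) ∧
      r = FreeGroup.of i * FreeGroup.of j * FreeGroup.of i *
        (FreeGroup.of j * FreeGroup.of i * FreeGroup.of j)⁻¹)}

/-- The braid group `B_{n+1}` on `n + 1` strands, presented by generators and relations. -/
abbrev BraidGroup (n : ℕ) : Type := PresentedGroup (braidRels n)

/-- The generator `σ_{i+1}` of the braid group `B_{n+1}`. -/
def σgen (n : ℕ) (i : Fin n) : BraidGroup n := PresentedGroup.of i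

/-- The positive braid monoid `B_{n+1}^+`: the submonoid generated by the `σ_i`. -/
def braidPos (n : ℕ) : Submonoid (BraidGroup n) :=
  Submonoid.closure (Set.range (σgen n))

/-- A braid is quasipositive if it is a product of conjugates of generators. -/
def Quasipositive {n : ℕ} (b : BraidGroup n) : Prop :=
  ∃ (k : ℕ) (w : Fin k → BraidGroup n) (idx : Fin k → Fin n),
    b = (List.ofFn fun j => w j * σgen n (idx j) * (w j)⁻¹).prod

/-- The `k`-sequence relation `X →^k Y`: `X` reduces to `Y` by deleting `k` generators. -/
inductive KSeq (n : ℕ) : ℕ → BraidGroup n → BraidGroup n → Prop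
  | zero (X : BraidGroup n) : KSeq n 0 X X
  | succ (k : ℕ) (u v Y : BraidGroup n) (i : Fin n)
      (hu : u ∈ braidPos n) (hv : v ∈ braidPos n)
      (h : KSeq n k (u * v) Y) : KSeq n (k + 1) (u * σgen n i * v) Y

/-- The exponent-sum (algebraic length) homomorphism `B_{n+1} → ℤ`, sending each `σ_i` to `1`. -/
def expSum (n : ℕ) : BraidGroup n →* Multiplicative ℤ :=
  PresentedGroup.toGroup (f := fun _ : Fin n => Multiplicative.ofAdd (1 : ℤ)) (by
    rintro r ⟨i, j, ⟨-, rfl⟩ | ⟨-, rfl⟩⟩ <;> simp <;> group)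

/-- The algebraic length of a braid: the image under the homomorphism sending `σ_i` to `1`.
On positive braids, this is the length function `ℓ`. -/
def algLength {n : ℕ} (b : BraidGroup n) : ℤ := Multiplicative.toAdd (expSum n b)

/-- The Garside element `Δ = (σ_1 ⋯ σ_n)(σ_1 ⋯ σ_{n-1}) ⋯ (σ_1 σ_2) σ_1` of `B_{n+1}`. -/
def braidDelta (n : ℕ) : BraidGroup n :=
  ((List.finRange n).reverse.map fun m =>
    (((List.finRange n).filter fun i => i ≤ m).map (σgen n)).prod).prod
/-- `LDvd a b` : `a` left-divides `b` in the positive braid monoid, i.e. `b = a * c`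
for some positive braid `c`. -/
def LDvd {n : ℕ} (a b : BraidGroup n) : Prop := ∃ c ∈ braidPos n, b = a * c

/-- `RDvd a b` : `a` right-divides `b` in the positive braid monoid, i.e. `b = c * a`
for some positive braid `c`. -/
def RDvd {n : ℕ} (a b : BraidGroup n) : Prop := ∃ c ∈ braidPos n, b = c * a

/-! ### The abstract positive braid monoid -/

/-- The indices of two generators that commute. -/
def BFar {n : ℕ} (i j : Fin n) : Prop := i.val + 1 < j.val ∨ j.val + 1 < i.val

/-- The indices of two generators that satisfy the relation of length three. -/
def BAdj {n : ℕ} (i j : Fin n) : Prop := i.val + 1 = j.val ∨ j.val + 1 = i.val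

lemma BFar.symm {n : ℕ} {i j : Fin n} (h : BFar i j) : BFar j i := Or.symm h

lemma BAdj.symm {n : ℕ} {i j : Fin n} (h : BAdj i j) : BAdj j i := Or.symm h

lemma eq_or_far_or_adj {n : ℕ} (i j : Fin n) : i = j ∨ BFar i j ∨ BAdj i j := by
  unfold BFar BAdj
  rw [Fin.ext_iff]
  omega

/-- The braid relations, as relations between positive words. -/
def monRels (n : ℕ) (u v : FreeMonoid (Fin n)) : Prop :=
  ∃ i j : Fin n,
    (BFar i j ∧ u = FreeMonoid.of i * FreeMonoid.of j ∧ v = FreeMonoid.of j * FreeMonoid.of i) ∨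
    (BAdj i j ∧ u = FreeMonoid.of i * (FreeMonoid.of j * FreeMonoid.of i) ∧
      v = FreeMonoid.of j * (FreeMonoid.of i * FreeMonoid.of j))

/-- The monoid presented by the braid relations (not a priori a submonoid of the braid group). -/
abbrev BMon (n : ℕ) : Type := PresentedMonoid (monRels n)

namespace BMon

variable {n : ℕ}

/-- The generators of `BMon n`. -/
def s (i : Fin n) : BMon n := PresentedMonoid.of (monRels n) i

/-- The class of a positive word. -/
abbrev word (u : FreeMonoid (Fin n)) : BMon n := PresentedMonoid.mk (monRels n) u

lemma word_cons (i : Fin n) (u : FreeMonoid (Fin n)) :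
    word (FreeMonoid.of i * u) = s i * word u := by
  simp [word, s, PresentedMonoid.of]

lemma word_mul (u v : FreeMonoid (Fin n)) : word (u * v) = word u * word v := map_mul _ _ _

lemma far_mul {i j : Fin n} (h : BFar i j) (x : BMon n) : s i * (s j * x) = s j * (s i * x) := by
  have := PresentedMonoid.mk_eq_mk_of_rel (rels := monRels n) ⟨i, j, Or.inl ⟨h, rfl, rfl⟩⟩
  simp only [map_mul] at this
  rw [← mul_assoc, ← mul_assoc]
  exact congrArg (· * x) this

lemma adj_mul {i j : Fin n} (h : BAdj i j) (x : BMon n) :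
    s i * (s j * (s i * x)) = s j * (s i * (s j * x)) := by
  have := PresentedMonoid.mk_eq_mk_of_rel (rels := monRels n) ⟨i, j, Or.inr ⟨h, rfl, rfl⟩⟩
  simp only [map_mul] at this
  simpa only [mul_assoc] using! congrArg (· * x) this

lemma ind {P : BMon n → Prop} (one : P 1) (cons : ∀ i a, P a → P (s i * a)) (a : BMon n) : P a := by
  obtain ⟨w, rfl⟩ := PresentedMonoid.surjective_mk a
  induction w using FreeMonoid.inductionOn' with
  | one => simpa using one
  | of_mul i w ih =>
    have := cons i _ ih
    rwa [← word_cons] at this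

lemma eq_one_or_cons (a : BMon n) : a = 1 ∨ ∃ i b, a = s i * b :=
  ind (P := fun a => a = 1 ∨ ∃ i b, a = s i * b) (Or.inl rfl) (fun i b _ => Or.inr ⟨i, b, rfl⟩) a

/-- The word length, as a homomorphism. -/
def lenHom (n : ℕ) : BMon n →* Multiplicative ℕ :=
  PresentedMonoid.lift (fun _ => Multiplicative.ofAdd 1) (by
    rintro u v ⟨i, j, ⟨-, rfl, rfl⟩ | ⟨-, rfl, rfl⟩⟩ <;> simp)

/-- The length of a positive braid. -/
def len (a : BMon n) : ℕ := Multiplicative.toAdd (lenHom n a)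

@[simp] lemma len_one : len (1 : BMon n) = 0 := by simp [len]

@[simp] lemma len_mul (a b : BMon n) : len (a * b) = len a + len b := by simp [len]

@[simp] lemma len_s (i : Fin n) : len (s i) = 1 := by simp [len, lenHom, s]

/-! ### Garside's lemma -/

/-- The conclusion of Garside's lemma for an equation `s i * a = s j * b`: the two sides are
multiples of `s i`, of `s i * s j`, or of `s i * s j * s i`, according to the relation between
the generators. -/
def Lcm (i j : Fin n) (a b : BMon n) : Prop :=
  (i = j ∧ a = b) ∨ (BFar i j ∧ ∃ c, a = s j * c ∧ b = s i * c) ∨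
    (BAdj i j ∧ ∃ c, a = s j * (s i * c) ∧ b = s i * (s j * c))

lemma Lcm.symm {i j : Fin n} {a b : BMon n} (h : Lcm i j a b) : Lcm j i b a := by
  rcases h with ⟨rfl, rfl⟩ | ⟨h, c, rfl, rfl⟩ | ⟨h, c, rfl, rfl⟩
  · exact Or.inl ⟨rfl, rfl⟩
  · exact Or.inr (Or.inl ⟨h.symm, c, rfl, rfl⟩)
  · exact Or.inr (Or.inr ⟨h.symm, c, rfl, rfl⟩)

lemma Lcm.eq {i : Fin n} {a b : BMon n} (h : Lcm i i a b) : a = b := by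
  rcases h with ⟨-, h⟩ | ⟨h, -⟩ | ⟨h, -⟩
  · exact h
  · unfold BFar at h; omega
  · unfold BAdj at h; omega

lemma Lcm.far {i j : Fin n} {a b : BMon n} (h : Lcm i j a b) (hij : BFar i j) :
    ∃ c, a = s j * c ∧ b = s i * c := by
  rcases h with ⟨rfl, -⟩ | ⟨-, h⟩ | ⟨h, -⟩
  · unfold BFar at hij; omega
  · exact h
  · unfold BFar at hij; unfold BAdj at h; omega

lemma Lcm.adj {i j : Fin n} {a b : BMon n} (h : Lcm i j a b) (hij : BAdj i j) :
    ∃ c, a = s j * (s i * c) ∧ b = s i * (s j * c) := by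
  rcases h with ⟨rfl, -⟩ | ⟨h, -⟩ | ⟨-, h⟩
  · unfold BAdj at hij; omega
  · unfold BFar at h; unfold BAdj at hij; omega
  · exact h

/-- Garside's lemma for equations `s i * a = s j * b` with `len a < N`. -/
def GarsideBelow (n N : ℕ) : Prop :=
  ∀ (i j : Fin n) (a b : BMon n), len a < N → s i * a = s j * b → Lcm i j a b

/-- The case of the transitivity of `Lcm` in which `s i` commutes with the middle generator `s m`
and is different from `s j`. -/
lemma Lcm.trans_far {N : ℕ} (hN : GarsideBelow n N) {i m j : Fin n} {a b t c : BMon n}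
    (ht : len t ≤ N) (him : BFar i m) (hij : i ≠ j) (ha : a = s m * c) (htc : t = s i * c)
    (h2 : Lcm m j t b) : Lcm i j a b := by
  rcases h2 with ⟨rfl, rfl⟩ | ⟨hmj, d, htd, hb⟩ | ⟨hmj, d, htd, hb⟩
  · exact Or.inr (Or.inl ⟨him, c, ha, htc⟩)
  · have hc : len c < N := by rw [htc] at ht; simp at ht; omega
    have key := hN i j c d hc (htc.symm.trans htd)
    rcases eq_or_far_or_adj i j with h | h | h
    · exact absurd h hij
    · obtain ⟨e, rfl, rfl⟩ := key.far h
      refine Or.inr (Or.inl ⟨h, s m * e, ?_, ?_⟩)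
      · rw [ha, far_mul hmj]
      · rw [hb, far_mul him]
    · obtain ⟨e, rfl, rfl⟩ := key.adj h
      refine Or.inr (Or.inr ⟨h, s m * e, ?_, ?_⟩)
      · rw [ha, far_mul hmj, far_mul him.symm]
      · rw [hb, far_mul him.symm, far_mul hmj]
  · have hc : len c < N := by rw [htc] at ht; simp at ht; omega
    have hl : len (s m * d) < N := by rw [htd] at ht; simp at ht ⊢; omega
    have key := hN i j c _ hc (htc.symm.trans htd)
    rcases eq_or_far_or_adj i j with h | h | h
    · exact absurd h hij
    · obtain ⟨e, rfl, he⟩ := key.far h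
      have hd : len d < N := by simp at hl; omega
      obtain ⟨f, rfl, rfl⟩ := (hN m i d e hd he).far him.symm
      refine Or.inr (Or.inl ⟨h, s m * (s j * f), ?_, ?_⟩)
      · rw [ha, adj_mul hmj]
      · rw [hb, far_mul h.symm, far_mul him.symm]
    · obtain ⟨e, rfl, he⟩ := key.adj h
      have hd : len d < N := by simp at hl; omega
      obtain ⟨f, rfl, hf⟩ := (hN m i d _ hd he).far him.symm
      have he' : len e < N := by simp at hc; omega
      obtain ⟨g, rfl, rfl⟩ := (hN j m e f he' hf).adj hmj.symm
      refine Or.inr (Or.inr ⟨h, s m * (s j * (s i * g)), ?_, ?_⟩)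
      · rw [ha, far_mul him, adj_mul hmj, ← adj_mul h, far_mul him.symm]
      · rw [hb, ← adj_mul h, far_mul him.symm, far_mul him g, adj_mul hmj]

/-- Transitivity of `Lcm`, by cases on the three pairs of generators, given Garside's lemma for
shorter elements. This is the step that extends the lemma along a chain of relations. -/
lemma Lcm.trans {N : ℕ} (hN : GarsideBelow n N) {i m j : Fin n} {a b t : BMon n}
    (ht : len t ≤ N) (h1 : Lcm i m a t) (h2 : Lcm m j t b) : Lcm i j a b := by
  by_cases hij : i = j
  · subst hij
    refine Or.inl ⟨rfl, ?_⟩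
    rcases h1 with ⟨rfl, rfl⟩ | ⟨him, c, rfl, rfl⟩ | ⟨him, c, rfl, rfl⟩
    · exact h2.eq
    · obtain ⟨d, hd, rfl⟩ := h2.far him.symm
      simp only [len_mul, len_s] at ht
      rw [(hN i i c d (by omega) hd).eq]
    · obtain ⟨d, hd, rfl⟩ := h2.adj him.symm
      simp only [len_mul, len_s] at ht
      have := (hN i i _ _ (by simp; omega) hd).eq
      rw [(hN m m c d (by omega) this).eq]
  rcases h1 with ⟨rfl, rfl⟩ | ⟨him, c, ha, htc⟩ | ⟨him, c, ha, htc⟩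
  · exact h2
  · exact Lcm.trans_far hN ht him hij ha htc h2
  rcases h2 with ⟨rfl, rfl⟩ | ⟨hmj, d, htd, hb⟩ | ⟨hmj, d, htd, hb⟩
  · exact Or.inr (Or.inr ⟨him, c, ha, htc⟩)
  · exact (Lcm.trans_far hN ht hmj.symm (Ne.symm hij) hb htd
      (Or.inr (Or.inr ⟨him.symm, c, htc, ha⟩))).symm
  · -- The three generators are pairwise different, so `s i` and `s j` are the two neighbours of `s m`.
    have hfar : BFar i j := by
      have := Fin.val_ne_of_ne hij
      unfold BAdj at him hmj
      unfold BFar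
      omega
    have hl : len (s m * c) < N := by rw [htc] at ht; simp at ht ⊢; omega
    have hl' : len (s m * d) < N := by rw [htd] at ht; simp at ht ⊢; omega
    obtain ⟨e, he, he'⟩ := (hN i j _ _ hl (htc.symm.trans htd)).far hfar
    rw [len_mul, len_s] at hl hl'
    obtain ⟨f, rfl, hf⟩ := (hN m j c e (by omega) he).adj hmj
    obtain ⟨g, rfl, hg⟩ := (hN m i d e (by omega) he').adj him.symm
    rw [hf] at hg
    simp only [len_mul, len_s] at hl
    have h3 := (hN m m _ _ (by simp; omega) hg).eq
    obtain ⟨k, rfl, rfl⟩ := (hN j i f g (by omega) h3).far hfar.symm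
    refine Or.inr (Or.inl ⟨hfar, s m * (s j * (s i * (s m * k))), ?_, ?_⟩)
    · rw [ha, far_mul hfar, adj_mul him, adj_mul hmj]
    · rw [hb, far_mul hfar.symm, adj_mul hmj.symm, adj_mul him.symm, far_mul hfar]

/-- Relation between two words that are both empty, or both nonempty and such that
Garside's lemma holds for the resulting equation between first letters and tails. -/
def WordLcm (u v : FreeMonoid (Fin n)) : Prop :=
  (u = 1 ∧ v = 1) ∨ ∃ i j a b, u = FreeMonoid.of i * a ∧ v = FreeMonoid.of j * b ∧
    Lcm i j (word a) (word b)

lemma cons_inj {i j : Fin n} {a b : FreeMonoid (Fin n)}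
    (h : FreeMonoid.of i * a = FreeMonoid.of j * b) : i = j ∧ a = b :=
  List.cons.inj h

lemma cons_ne_one {i : Fin n} {a : FreeMonoid (Fin n)} (h : FreeMonoid.of i * a = 1) : False :=
  List.cons_ne_nil _ _ h

lemma wordLcm_of_rel {N : ℕ} (hN : GarsideBelow n N) {u v : FreeMonoid (Fin n)}
    (h : ConGen.Rel (monRels n) u v) : word u = word v ∧ (len (word u) ≤ N + 1 → WordLcm u v) := by
  refine ⟨PresentedMonoid.mk_eq_mk_iff.2 h, ?_⟩
  induction h with
  | of u v h =>
    intro _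
    obtain ⟨i, j, ⟨h, rfl, rfl⟩ | ⟨h, rfl, rfl⟩⟩ := h
    · exact Or.inr ⟨i, j, _, _, rfl, rfl, Or.inr (Or.inl ⟨h, 1, by simp [s, PresentedMonoid.of],
        by simp [s, PresentedMonoid.of]⟩)⟩
    · exact Or.inr ⟨i, j, _, _, rfl, rfl, Or.inr (Or.inr ⟨h, 1, by simp [s, PresentedMonoid.of],
        by simp [s, PresentedMonoid.of]⟩)⟩
  | refl u =>
    intro _
    induction u using FreeMonoid.casesOn with
    | one => exact Or.inl ⟨rfl, rfl⟩
    | of_mul i u => exact Or.inr ⟨i, i, u, u, rfl, rfl, Or.inl ⟨rfl, rfl⟩⟩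
  | symm h ih =>
    intro hl
    have huv : word _ = word _ := PresentedMonoid.mk_eq_mk_iff.2 h
    rcases ih (huv ▸ hl) with ⟨hu, hv⟩ | ⟨i, j, a, b, hu, hv, hL⟩
    · exact Or.inl ⟨hv, hu⟩
    · exact Or.inr ⟨j, i, b, a, hv, hu, hL.symm⟩
  | trans h h' ih ih' =>
    intro hl
    have huv : word _ = word _ := PresentedMonoid.mk_eq_mk_iff.2 h
    have hl' := huv ▸ hl
    rcases ih hl with ⟨rfl, rfl⟩ | ⟨i, m, a, t, rfl, rfl, hL⟩
    · exact ih' hl'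
    · rcases ih' hl' with ⟨h1, -⟩ | ⟨m', j, t', b, h1, rfl, hL'⟩
      · exact (cons_ne_one h1).elim
      · obtain ⟨rfl, rfl⟩ := cons_inj h1
        rw [word_cons, len_mul, len_s] at hl'
        exact Or.inr ⟨i, j, a, b, rfl, rfl, hL.trans hN (by omega) hL'⟩
  | mul h h' ih ih' =>
    intro hl
    rw [word_mul, len_mul] at hl
    rcases ih (by omega) with ⟨rfl, rfl⟩ | ⟨i, j, a, b, rfl, rfl, hL⟩
    · simp only [one_mul]
      exact ih' (by omega)
    · have hyz : word _ = word _ := PresentedMonoid.mk_eq_mk_iff.2 h'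
      refine Or.inr ⟨i, j, _, _, mul_assoc _ _ _, mul_assoc _ _ _, ?_⟩
      rw [word_mul, word_mul, ← hyz]
      rcases hL with ⟨rfl, hab⟩ | ⟨h, c, hac, hbc⟩ | ⟨h, c, hac, hbc⟩
      · exact Or.inl ⟨rfl, by rw [hab]⟩
      · exact Or.inr (Or.inl ⟨h, c * _, by rw [hac, mul_assoc], by rw [hbc, mul_assoc]⟩)
      · exact Or.inr (Or.inr ⟨h, c * _, by rw [hac, mul_assoc, mul_assoc],
          by rw [hbc, mul_assoc, mul_assoc]⟩)

lemma garsideBelow (N : ℕ) : GarsideBelow n N := by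
  induction N with
  | zero => intro i j a b h; omega
  | succ N hN =>
    intro i j a b hl hab
    obtain ⟨u, rfl⟩ := PresentedMonoid.surjective_mk a
    obtain ⟨v, rfl⟩ := PresentedMonoid.surjective_mk b
    have hab' : word (FreeMonoid.of i * u) = word (FreeMonoid.of j * v) := by
      rw [word_cons, word_cons]; exact hab
    have := (wordLcm_of_rel hN (PresentedMonoid.mk_eq_mk_iff.1 hab')).2
      (by rw [word_cons, len_mul, len_s]; change len (word u) < _ at hl; omega)
    rcases this with ⟨h, -⟩ | ⟨i', j', a', b', h1, h2, hL⟩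
    · exact (cons_ne_one h).elim
    · obtain ⟨rfl, rfl⟩ := cons_inj h1
      obtain ⟨rfl, rfl⟩ := cons_inj h2
      exact hL

/-- Garside's lemma. -/
lemma garside {i j : Fin n} {a b : BMon n} (h : s i * a = s j * b) : Lcm i j a b :=
  garsideBelow (len a + 1) i j a b (Nat.lt_succ_self _) h

lemma s_cancel {i : Fin n} {a b : BMon n} (h : s i * a = s i * b) : a = b := (garside h).eq

lemma left_cancel (a : BMon n) : ∀ {b c : BMon n}, a * b = a * c → b = c := by
  induction a using ind with
  | one => intro b c h; simpa using h
  | cons i a ih =>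
    intro b c h
    rw [mul_assoc, mul_assoc] at h
    exact ih (s_cancel h)

/-- Any two generators have a least common multiple. -/
lemma exists_lcm (i j : Fin n) : ∃ p q : BMon n, s i * p = s j * q ∧
    ∀ a b, s i * a = s j * b → ∃ c, a = p * c ∧ b = q * c := by
  rcases eq_or_far_or_adj i j with rfl | h | h
  · exact ⟨1, 1, rfl, fun a b hab => ⟨a, by simp, by simp [s_cancel hab]⟩⟩
  · refine ⟨s j, s i, by simpa using far_mul h 1, fun a b hab => (garside hab).far h⟩
  · refine ⟨s j * s i, s i * s j, by simpa using adj_mul h 1, fun a b hab => ?_⟩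
    simpa only [mul_assoc] using (garside hab).adj h

/-! ### Greatest common divisors -/

lemma dvd_of_mul_dvd {a b c : BMon n} (h : a * b ∣ a * c) : b ∣ c := by
  obtain ⟨d, hd⟩ := h
  rw [mul_assoc] at hd
  exact ⟨d, left_cancel a hd⟩

/-- Two common left divisors of `x` and `y` have a common multiple that is again a common left
divisor of `x` and `y`. -/
lemma exists_joint (N : ℕ) : ∀ x y g c : BMon n, len x ≤ N → g ∣ x → g ∣ y → c ∣ x → c ∣ y →
    ∃ m, g ∣ m ∧ c ∣ m ∧ m ∣ x ∧ m ∣ y := by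
  induction N with
  | zero =>
    intro x y g c hx hgx hgy hcx hcy
    rcases eq_one_or_cons g with rfl | ⟨i, g, rfl⟩
    · exact ⟨c, one_dvd _, dvd_rfl, hcx, hcy⟩
    · obtain ⟨z, rfl⟩ := hgx
      simp at hx
  | succ N ih =>
    intro x y g c hx hgx hgy hcx hcy
    rcases eq_one_or_cons g with rfl | ⟨i, g, rfl⟩
    · exact ⟨c, one_dvd _, dvd_rfl, hcx, hcy⟩
    rcases eq_one_or_cons c with rfl | ⟨j, c, rfl⟩
    · exact ⟨_, dvd_rfl, one_dvd _, hgx, hgy⟩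
    obtain ⟨p, q, hpq, hlcm⟩ := exists_lcm i j
    obtain ⟨x1, rfl⟩ := (dvd_mul_right (s i) g).trans hgx
    obtain ⟨y1, rfl⟩ := (dvd_mul_right (s i) g).trans hgy
    obtain ⟨x2, hx2⟩ := (dvd_mul_right (s j) c).trans hcx
    obtain ⟨y2, hy2⟩ := (dvd_mul_right (s j) c).trans hcy
    have hpx : p ∣ x1 := let ⟨e, h, _⟩ := hlcm _ _ hx2; ⟨e, h⟩
    have hpy : p ∣ y1 := let ⟨e, h, _⟩ := hlcm _ _ hy2; ⟨e, h⟩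
    have hlx : len x1 ≤ N := by simp at hx; omega
    have hlx2 : len x2 ≤ N := by have := congrArg len hx2; simp at this; omega
    -- First join `s i * g` with the least common multiple of `s i` and `s j`.
    obtain ⟨_, hg, ⟨t, rfl⟩, hmx, hmy⟩ :=
      ih x1 y1 g p hlx (dvd_of_mul_dvd hgx) (dvd_of_mul_dvd hgy) hpx hpy
    have hm : s i * (p * t) = s j * (q * t) := by rw [← mul_assoc, hpq, mul_assoc]
    have hmx' := mul_dvd_mul_left (s i) hmx
    have hmy' := mul_dvd_mul_left (s i) hmy
    rw [hx2] at hcx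
    rw [hy2] at hcy
    rw [hm, hx2] at hmx'
    rw [hm, hy2] at hmy'
    -- Then join the result with `s j * c`.
    obtain ⟨m, h1, h2, h3, h4⟩ := ih x2 y2 (q * t) c hlx2 (dvd_of_mul_dvd hmx')
      (dvd_of_mul_dvd hmy') (dvd_of_mul_dvd hcx) (dvd_of_mul_dvd hcy)
    refine ⟨s j * m, ?_, mul_dvd_mul_left _ h2, ?_, ?_⟩
    · refine (mul_dvd_mul_left (s i) hg).trans ?_
      rw [hm]
      exact mul_dvd_mul_left _ h1
    · rw [hx2]
      exact mul_dvd_mul_left _ h3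
    · rw [hy2]
      exact mul_dvd_mul_left _ h4

/-- A generator dividing both `s i * B` and `B` can be moved to the left of the distinguished
letter. -/
lemma shorten {i j : Fin n} {B : BMon n} (h1 : s j ∣ s i * B) (h2 : s j ∣ B) (A : BMon n) :
    ∃ (A' B' : BMon n) (i' : Fin n), len B' < len B ∧
      A * s i * B = A' * s i' * B' ∧ A * B = A' * B' := by
  obtain ⟨C, hC⟩ := h1
  rcases garside hC with ⟨rfl, -⟩ | ⟨h, c, rfl, -⟩ | ⟨h, c, rfl, -⟩
  · obtain ⟨B, rfl⟩ := h2
    exact ⟨A * s i, B, i, by simp, by simp [mul_assoc], by simp [mul_assoc]⟩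
  · refine ⟨A * s j, c, i, by simp, ?_, by simp [mul_assoc]⟩
    simp only [mul_assoc]
    rw [far_mul h]
  · refine ⟨A * s j * s i, c, j, by simp; omega, ?_, by simp [mul_assoc]⟩
    simp only [mul_assoc]
    rw [adj_mul h]

lemma left_gcd (N : ℕ) : ∀ (A B : BMon n) (i : Fin n), len B ≤ N →
    ∃ (A' B' : BMon n) (i' : Fin n), A * s i * B = A' * s i' * B' ∧ A * B = A' * B' ∧
      ∀ c, c ∣ A * s i * B → c ∣ A * B → c ∣ A' := by
  induction N using Nat.strong_induction_on with
  | _ N ih =>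
    intro A B i hB
    by_cases hex : ∃ j, s j ∣ s i * B ∧ s j ∣ B
    · obtain ⟨j, h1, h2⟩ := hex
      obtain ⟨A₁, B₁, i₁, hl, e1, e2⟩ := shorten h1 h2 A
      rw [e1, e2]
      exact ih (len B₁) (by omega) A₁ B₁ i₁ le_rfl
    · refine ⟨A, B, i, rfl, rfl, fun c h1 h2 => ?_⟩
      obtain ⟨m, ⟨e, rfl⟩, hc, hm1, hm2⟩ := exists_joint _ _ _ A c le_rfl
        (by rw [mul_assoc]; exact dvd_mul_right _ _) (dvd_mul_right A B) h1 h2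
      rw [mul_assoc] at hm1
      rcases eq_one_or_cons e with rfl | ⟨j, e, rfl⟩
      · simpa using hc
      · exact (hex ⟨j, (dvd_mul_right _ _).trans (dvd_of_mul_dvd hm1),
          (dvd_mul_right _ _).trans (dvd_of_mul_dvd hm2)⟩).elim

/-! ### A central element divisible by every generator -/

/-- The generators indexed by `ℕ`, extended by `1` outside the range. -/
def sN (n k : ℕ) : BMon n := if h : k < n then s ⟨k, h⟩ else 1

lemma sN_far {j k : ℕ} (hj : j < n) (hk : k < n) (h : j + 1 < k) :
    sN n j * sN n k = sN n k * sN n j := by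
  have := far_mul (i := ⟨j, hj⟩) (j := ⟨k, hk⟩) (Or.inl h) 1
  simpa [sN, hj, hk] using this

lemma sN_adj {k : ℕ} (hk : k + 1 < n) :
    sN n k * sN n (k + 1) * sN n k = sN n (k + 1) * sN n k * sN n (k + 1) := by
  have hk' : k < n := by omega
  have := adj_mul (i := ⟨k, hk'⟩) (j := ⟨k + 1, hk⟩) (Or.inl rfl) 1
  simpa [sN, hk, hk', mul_assoc] using this

/-- The product `s 0 * ⋯ * s (k - 1)`. -/
def initProd (n : ℕ) : ℕ → BMon n
  | 0 => 1
  | k + 1 => initProd n k * sN n k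

/-- The product `s 1 * ⋯ * s k`. -/
def shiftProd (n : ℕ) : ℕ → BMon n
  | 0 => 1
  | k + 1 => shiftProd n k * sN n (k + 1)

lemma initProd_comm {j : ℕ} (hj : j < n) : ∀ {k : ℕ}, k < j →
    initProd n k * sN n j = sN n j * initProd n k
  | 0, _ => by simp [initProd]
  | k + 1, h => by
    rw [initProd, mul_assoc, sN_far (by omega) hj h, ← mul_assoc, initProd_comm hj (by omega),
      mul_assoc]

lemma initProd_shift {i : ℕ} : ∀ {k : ℕ}, k ≤ n → i + 1 < k →
    initProd n k * sN n i = sN n (i + 1) * initProd n k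
  | 0, _, h => by omega
  | k + 1, hk, h => by
    rcases (show i + 1 ≤ k by omega).lt_or_eq with h' | rfl
    · rw [initProd, mul_assoc, ← sN_far (by omega) (by omega) h', ← mul_assoc,
        initProd_shift (by omega) h', mul_assoc]
    · rw [initProd, initProd, mul_assoc, mul_assoc, ← mul_assoc (sN n i), sN_adj hk, mul_assoc,
        ← mul_assoc, initProd_comm hk (by omega)]
      simp only [mul_assoc]

lemma shiftProd_eq : ∀ k, sN n 0 * shiftProd n k = initProd n (k + 1)
  | 0 => by simp [shiftProd, initProd]
  | k + 1 => by rw [shiftProd, ← mul_assoc, shiftProd_eq k, initProd]; rfl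

lemma initProd_mul_initProd : ∀ {k : ℕ}, k < n →
    initProd n n * initProd n k = shiftProd n k * initProd n n
  | 0, _ => by simp [shiftProd, initProd]
  | k + 1, h => by
    have e : initProd n (k + 1) = initProd n k * sN n k := rfl
    rw [e, ← mul_assoc, initProd_mul_initProd (by omega), mul_assoc, initProd_shift le_rfl h,
      shiftProd, mul_assoc]

/-- The square of `δ = s 0 * ⋯ * s m` carries the last generator to the first one. -/
lemma delta_sq (m : ℕ) : initProd (m + 1) (m + 1) ^ 2 * sN (m + 1) m =
    sN (m + 1) 0 * initProd (m + 1) (m + 1) ^ 2 := by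
  have e : initProd (m + 1) (m + 1) = initProd (m + 1) m * sN (m + 1) m := rfl
  have h : initProd (m + 1) (m + 1) ^ 2 =
      shiftProd (m + 1) m * initProd (m + 1) (m + 1) * sN (m + 1) m := by
    rw [← initProd_mul_initProd (Nat.lt_succ_self m), mul_assoc, ← e, sq]
  conv_rhs => rw [h, ← mul_assoc, ← mul_assoc, shiftProd_eq]
  rw [sq]

lemma delta_pow (m : ℕ) {i : ℕ} : ∀ k, i + k ≤ m →
    initProd (m + 1) (m + 1) ^ k * sN (m + 1) i =
      sN (m + 1) (i + k) * initProd (m + 1) (m + 1) ^ k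
  | 0, _ => by simp
  | k + 1, h => by
    rw [pow_succ', mul_assoc, delta_pow m k (by omega), ← mul_assoc,
      initProd_shift le_rfl (by omega), mul_assoc]
    rfl

/-- The element `δ ^ (n + 1)` with `δ = s 0 * ⋯ * s (n - 1)`. -/
def full (n : ℕ) : BMon n := initProd n n ^ (n + 1)

lemma sN_val (i : Fin n) : sN n i = s i := by simp [sN]

lemma full_comm_s (i : Fin n) : full n * s i = s i * full n := by
  obtain ⟨m, rfl⟩ : ∃ m, n = m + 1 := ⟨n - 1, by have := i.2; omega⟩
  have hi : i.val ≤ m := by omega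
  have e : full (m + 1) = initProd (m + 1) (m + 1) ^ i.val * (initProd (m + 1) (m + 1) ^ 2 *
      initProd (m + 1) (m + 1) ^ (m - i.val)) := by
    rw [← pow_add, ← pow_add, full]
    congr 1
    omega
  have h1 := delta_pow m (i := i.val) (m - i.val) (by omega)
  have h2 := delta_pow m (i := 0) i.val (by omega)
  rw [show i.val + (m - i.val) = m by omega] at h1
  rw [zero_add] at h2
  rw [← sN_val, e, mul_assoc, mul_assoc, h1, ← mul_assoc (_ ^ 2), delta_sq, mul_assoc (sN _ 0),
    ← mul_assoc, h2, mul_assoc]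

lemma full_comm (a : BMon n) : full n * a = a * full n := by
  induction a using ind with
  | one => simp
  | cons i a ih => rw [← mul_assoc, full_comm_s, mul_assoc, ih, mul_assoc]

lemma s_dvd_full (i : Fin n) : s i ∣ full n := by
  obtain ⟨m, rfl⟩ : ∃ m, n = m + 1 := ⟨n - 1, by have := i.2; omega⟩
  have e : full (m + 1) = initProd (m + 1) (m + 1) ^ i.val * (initProd (m + 1) (m + 1) *
      initProd (m + 1) (m + 1) ^ (m + 1 - i.val)) := by
    rw [← pow_succ', ← pow_add, full]
    congr 1
    omega
  have h2 := delta_pow m (i := 0) i.val (by omega)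
  rw [zero_add] at h2
  have e' : full (m + 1) = sN (m + 1) i * (initProd (m + 1) (m + 1) ^ i.val * (shiftProd (m + 1) m *
      initProd (m + 1) (m + 1) ^ (m + 1 - i.val))) := by
    rw [← mul_assoc, ← h2, e]
    nth_rw 2 [← shiftProd_eq]
    simp only [mul_assoc]
  rw [e', sN_val]
  exact dvd_mul_right _ _

/-! ### Embedding into the braid group -/

/-- The powers of the central element form an Ore set. -/
instance : OreLocalization.OreSet (Submonoid.powers (full n)) where
  ore_right_cancel r₁ r₂ t h := by
    obtain ⟨_, k, rfl⟩ := t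
    have hc : ∀ a : BMon n, full n ^ k * a = a * full n ^ k :=
      fun a => Commute.pow_left (full_comm a) k
    exact ⟨⟨_, k, rfl⟩, by simpa only [hc] using h⟩
  oreNum r _ := r
  oreDenom _ t := t
  ore_eq r t := by
    obtain ⟨_, k, rfl⟩ := t
    exact Commute.pow_left (full_comm r) k

/-- The monoid of fractions of `BMon n` whose denominators are powers of the central element. -/
abbrev Frac (n : ℕ) : Type := OreLocalization (Submonoid.powers (full n)) (BMon n)

/-- The map from `BMon n` to its monoid of fractions. -/
abbrev toFrac (n : ℕ) : BMon n →* Frac n := OreLocalization.numeratorHom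

lemma toFrac_injective : Function.Injective (toFrac n) := by
  intro a b h
  rw [toFrac, OreLocalization.numeratorHom_apply, OreLocalization.numeratorHom_apply,
    OreLocalization.oreDiv_eq_iff] at h
  obtain ⟨u, v, h1, h2⟩ := h
  simp only [Submonoid.coe_one, mul_one] at h2
  rw [Submonoid.smul_def, h2] at h1
  exact (left_cancel v h1).symm

lemma isUnit_toFrac_s (i : Fin n) : IsUnit (toFrac n (s i)) := by
  obtain ⟨c, hc⟩ := s_dvd_full i
  have hc' : full n = c * s i := by
    refine s_cancel (i := i) ?_
    rw [← full_comm_s, ← mul_assoc, ← hc]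
  have hu : IsUnit (toFrac n (full n)) :=
    OreLocalization.numerator_isUnit (⟨full n, 1, pow_one _⟩ : Submonoid.powers (full n))
  obtain ⟨u, hu⟩ := hu
  refine isUnit_iff_exists_and_exists.2 ⟨⟨toFrac n c * ↑u⁻¹, ?_⟩, ⟨↑u⁻¹ * toFrac n c, ?_⟩⟩
  · rw [← mul_assoc, ← map_mul, ← hc, ← hu, Units.mul_inv]
  · rw [mul_assoc, ← map_mul, ← hc', ← hu, Units.inv_mul]

/-- The map from the braid group to the units of the monoid of fractions. -/
noncomputable def groupToFrac (n : ℕ) : BraidGroup n →* (Frac n)ˣ :=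
  PresentedGroup.toGroup (f := fun i => (isUnit_toFrac_s i).unit) (by
    rintro r ⟨i, j, ⟨h, rfl⟩ | ⟨h, rfl⟩⟩
    · rw [map_mul, map_inv, mul_inv_eq_one]
      ext
      simp only [map_mul, FreeGroup.lift_apply_of, Units.val_mul, IsUnit.unit_spec]
      rw [← map_mul, ← map_mul]
      congr 1
      simpa using far_mul h 1
    · rw [map_mul, map_inv, mul_inv_eq_one]
      ext
      simp only [map_mul, FreeGroup.lift_apply_of, Units.val_mul, IsUnit.unit_spec]
      simp only [← map_mul]
      congr 1
      simpa [mul_assoc] using adj_mul h 1)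

end BMon

lemma σgen_far {n : ℕ} {i j : Fin n} (h : BFar i j) :
    σgen n i * σgen n j = σgen n j * σgen n i := by
  have := PresentedGroup.mk_eq_mk_of_mul_inv_mem (rels := braidRels n) ⟨i, j, Or.inl ⟨h, rfl⟩⟩
  simpa [σgen, PresentedGroup.of] using this

lemma σgen_adj {n : ℕ} {i j : Fin n} (h : BAdj i j) :
    σgen n i * σgen n j * σgen n i = σgen n j * σgen n i * σgen n j := by
  have := PresentedGroup.mk_eq_mk_of_mul_inv_mem (rels := braidRels n) ⟨i, j, Or.inr ⟨h, rfl⟩⟩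
  simpa [σgen, PresentedGroup.of] using this

namespace BMon

variable {n : ℕ}

/-- The canonical map from the presented monoid to the braid group. -/
def toGroup (n : ℕ) : BMon n →* BraidGroup n :=
  PresentedMonoid.lift (σgen n) (by
    rintro u v ⟨i, j, ⟨h, rfl, rfl⟩ | ⟨h, rfl, rfl⟩⟩
    · simpa using σgen_far h
    · simpa [mul_assoc] using σgen_adj h)

@[simp] lemma toGroup_s (i : Fin n) : toGroup n (s i) = σgen n i := rfl

lemma toGroup_injective : Function.Injective (toGroup n) := by
  have key : ∀ a : BMon n, (groupToFrac n (toGroup n a) : Frac n) = toFrac n a := by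
    intro a
    induction a using ind with
    | one => rw [map_one, map_one, map_one, Units.val_one]
    | cons i a ih =>
      rw [map_mul, map_mul, Units.val_mul, ih, map_mul, toGroup_s]
      congr 1
      simp [groupToFrac, σgen]
  intro a b h
  apply toFrac_injective
  rw [← key, ← key, h]

lemma mem_braidPos_iff {x : BraidGroup n} : x ∈ braidPos n ↔ ∃ a, toGroup n a = x := by
  constructor
  · intro hx
    have : braidPos n ≤ MonoidHom.mrange (toGroup n) := by
      rw [braidPos, Submonoid.closure_le]
      rintro _ ⟨i, rfl⟩
      exact ⟨s i, rfl⟩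
    exact this hx
  · rintro ⟨a, rfl⟩
    induction a using ind with
    | one => simp
    | cons i a ih =>
      rw [map_mul]
      exact Submonoid.mul_mem _ (Submonoid.subset_closure ⟨i, rfl⟩) ih

lemma dvd_of_lDvd {a b : BMon n} (h : LDvd (toGroup n a) (toGroup n b)) : a ∣ b := by
  obtain ⟨c, hc, e⟩ := h
  obtain ⟨c, rfl⟩ := mem_braidPos_iff.1 hc
  rw [← map_mul] at e
  exact ⟨c, toGroup_injective e⟩

end BMon

open BMon in
lemma exists_left_gcd (n : ℕ) (A B : BraidGroup n)
    (hA : A ∈ braidPos n) (hB : B ∈ braidPos n) (i : Fin n) :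
    ∃ (A'' B'' : BraidGroup n) (i'' : Fin n), A'' ∈ braidPos n ∧ B'' ∈ braidPos n ∧
      A * σgen n i * B = A'' * σgen n i'' * B'' ∧ A * B = A'' * B'' ∧
      LDvd A'' (A * σgen n i * B) ∧ LDvd A'' (A * B) ∧
      ∀ c ∈ braidPos n, LDvd c (A * σgen n i * B) → LDvd c (A * B) → LDvd c A'' := by
  obtain ⟨A, rfl⟩ := mem_braidPos_iff.1 hA
  obtain ⟨B, rfl⟩ := mem_braidPos_iff.1 hB
  obtain ⟨A', B', i', e1, e2, h⟩ := left_gcd _ A B i le_rfl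
  have e1' := congrArg (toGroup n) e1
  have e2' := congrArg (toGroup n) e2
  simp only [map_mul, toGroup_s] at e1' e2'
  refine ⟨toGroup n A', toGroup n B', i', mem_braidPos_iff.2 ⟨_, rfl⟩, mem_braidPos_iff.2 ⟨_, rfl⟩,
    e1', e2', ⟨toGroup n (s i' * B'), mem_braidPos_iff.2 ⟨_, rfl⟩, ?_⟩,
    ⟨toGroup n B', mem_braidPos_iff.2 ⟨_, rfl⟩, e2'⟩, ?_⟩
  · rw [e1', map_mul, toGroup_s, mul_assoc]
  · intro c hc h1 h2
    obtain ⟨c, rfl⟩ := mem_braidPos_iff.1 hc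
    rw [← toGroup_s, ← map_mul, ← map_mul] at h1
    rw [← map_mul] at h2
    obtain ⟨d, rfl⟩ := h c (dvd_of_lDvd h1) (dvd_of_lDvd h2)
    exact ⟨toGroup n d, mem_braidPos_iff.2 ⟨_, rfl⟩, map_mul _ _ _⟩

/-! ### Reversal -/

open MulOpposite

/-- The anti-automorphism of the braid group fixing the generators, as a homomorphism to the
opposite group. -/
def revHom (n : ℕ) : BraidGroup n →* (BraidGroup n)ᵐᵒᵖ :=
  PresentedGroup.toGroup (f := fun i => op (σgen n i)) (by
    rintro r ⟨i, j, ⟨h, rfl⟩ | ⟨h, rfl⟩⟩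
    · rw [map_mul, map_inv, mul_inv_eq_one]
      simp only [map_mul, FreeGroup.lift_apply_of, ← op_mul]
      rw [σgen_far h]
    · rw [map_mul, map_inv, mul_inv_eq_one]
      simp only [map_mul, FreeGroup.lift_apply_of, ← op_mul, ← mul_assoc]
      rw [σgen_adj h])

/-- Reversal of braids: `σ_i σ_j ⋯ σ_k` is sent to `σ_k ⋯ σ_j σ_i`. -/
def rev {n : ℕ} (x : BraidGroup n) : BraidGroup n := unop (revHom n x)

lemma rev_mul {n : ℕ} (x y : BraidGroup n) : rev (x * y) = rev y * rev x := by simp [rev]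

lemma rev_σgen {n : ℕ} (i : Fin n) : rev (σgen n i) = σgen n i := by simp [rev, revHom, σgen]

lemma rev_rev {n : ℕ} (x : BraidGroup n) : rev (rev x) = x := by
  let f : BraidGroup n →* BraidGroup n :=
    { toFun := fun x => rev (rev x)
      map_one' := by simp [rev]
      map_mul' := fun x y => by rw [rev_mul, rev_mul] }
  have : f = MonoidHom.id _ := by
    ext i
    change rev (rev (σgen n i)) = σgen n i
    rw [rev_σgen, rev_σgen]
  exact DFunLike.congr_fun this x

lemma rev_mem {n : ℕ} {x : BraidGroup n} (hx : x ∈ braidPos n) : rev x ∈ braidPos n := by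
  induction hx using Submonoid.closure_induction with
  | mem x h =>
    obtain ⟨i, rfl⟩ := h
    rw [rev_σgen]
    exact Submonoid.subset_closure ⟨i, rfl⟩
  | one => simp [rev]
  | mul x y _ _ hx hy =>
    rw [rev_mul]
    exact Submonoid.mul_mem _ hy hx

lemma LDvd.rev {n : ℕ} {a b : BraidGroup n} (h : LDvd a b) : RDvd (rev a) (rev b) := by
  obtain ⟨c, hc, rfl⟩ := h
  exact ⟨_, rev_mem hc, rev_mul _ _⟩

lemma RDvd.rev {n : ℕ} {a b : BraidGroup n} (h : RDvd a b) : LDvd (rev a) (rev b) := by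
  obtain ⟨c, hc, rfl⟩ := h
  exact ⟨_, rev_mem hc, rev_mul _ _⟩

/-- Lemma 10: for positive braids `A`, `B` and a generator `σ_i`, setting
`L₁ = AσB` and `L₀ = AB`, there exist positive `A'`, `B'` and a generator `σ'` with
`AσB = A'σ'B'`, `AB = A'B'` and `B'` a right gcd of `L₁`, `L₀`; symmetrically there exist
`A''`, `B''`, `σ''` with `AσB = A''σ''B''`, `AB = A''B''` and `A''` a left gcd of `L₁`, `L₀`. -/
theorem statement11 (n : ℕ) (A B : BraidGroup n)
    (hA : A ∈ braidPos n) (hB : B ∈ braidPos n) (i : Fin n) :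
    (∃ (A' B' : BraidGroup n) (i' : Fin n), A' ∈ braidPos n ∧ B' ∈ braidPos n ∧
      A * σgen n i * B = A' * σgen n i' * B' ∧ A * B = A' * B' ∧
      RDvd B' (A * σgen n i * B) ∧ RDvd B' (A * B) ∧
      ∀ c ∈ braidPos n, RDvd c (A * σgen n i * B) → RDvd c (A * B) → RDvd c B') ∧
    (∃ (A'' B'' : BraidGroup n) (i'' : Fin n), A'' ∈ braidPos n ∧ B'' ∈ braidPos n ∧
      A * σgen n i * B = A'' * σgen n i'' * B'' ∧ A * B = A'' * B'' ∧
      LDvd A'' (A * σgen n i * B) ∧ LDvd A'' (A * B) ∧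
      ∀ c ∈ braidPos n, LDvd c (A * σgen n i * B) → LDvd c (A * B) → LDvd c A'') := by
  refine ⟨?_, exists_left_gcd n A B hA hB i⟩
  obtain ⟨A', B', i', hA', hB', e1, e2, h1, h2, h⟩ :=
    exists_left_gcd n (rev B) (rev A) (rev_mem hB) (rev_mem hA) i
  have r1 : rev (rev B * σgen n i * rev A) = A * σgen n i * B := by
    simp only [rev_mul, rev_rev, rev_σgen, mul_assoc]
  have r2 : rev (rev B * rev A) = A * B := by rw [rev_mul, rev_rev, rev_rev]
  refine ⟨rev B', rev A', i', rev_mem hB', rev_mem hA', ?_, ?_, r1 ▸ h1.rev, r2 ▸ h2.rev, ?_⟩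
  · rw [← r1, e1]
    simp only [rev_mul, rev_σgen, mul_assoc]
  · rw [← r2, e2, rev_mul]
  · intro c hc hc1 hc2
    rw [← r1] at hc1
    rw [← r2] at hc2
    have := (h _ (rev_mem hc) (by simpa only [rev_rev] using hc1.rev)
      (by simpa only [rev_rev] using hc2.rev)).rev
    rwa [rev_rev] at this
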